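/- Fix σ_1, …, σ_p > 0, σ_y > 0, A ∈ ℝ^p, and let M = diag(σ_1², …, σ_p²). Let 0 < s < 1 and δ ∈ (0,1), and let k ≥ (8/s)·log(2/δ) be an integer. Draw k independent batches, where batch j consists of a matrix X^{(j)} ∈ ℝ^{p×p} with rows i.i.d. N(0, M) and an independent vector η^{(j)} ∈ ℝ^p with i.i.d. N(0, σ_y²) entries, all batches mutually independent; let Ã^{(j)} solve X^{(j)}Ã^{(j)} = X^{(j)}A + η^{(j)}; define Â ∈ ℝ^p coordinate-wise by Â_i = median_{j=1,…,k} Ã_i^{(j)}, and Δ = Â − A. Then Pr( |ΔᵀMΔ| ≤ σ_y²·p·s ) ≥ 1 − p·δ. (In the paper s = ε/(n·d_avg), giving the per-node guarantee |ΔᵀMΔ| ≤ σ_y²·ε·p/(n·d_avg) for the CauchyEstTree estimator.) -/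

import Mathlib

open MeasureTheory ProbabilityTheory Matrix

/-- The centered multivariate Gaussian `N(0, LLᵀ)` on `ℝ^p`, realized as the pushforward
of the standard Gaussian product measure under `x ↦ Lx`. -/
noncomputable def mvg0 {p : ℕ} (L : Matrix (Fin p) (Fin p) ℝ) : Measure (Fin p → ℝ) :=
  Measure.map (fun x => L.mulVec x) (Measure.pi fun _ : Fin p => gaussianReal 0 1)

/-- The sample median of `k` values (the entry at position `⌊k/2⌋` of the sorted list,
`0`-indexed). -/
noncomputable def sampleMedian {k : ℕ} (X : Fin k → ℝ) : ℝ :=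
  ((Multiset.map X Finset.univ.val).sort (· ≤ ·)).getD (k / 2) 0

/-!
Rescaling columns and noise reduces a batch to a standard Gaussian matrix `Z` and vector `η`. By
Cramer's rule the `i`-th coordinate of `Z⁻¹ η` is `(c ⬝ᵥ η) / (c ⬝ᵥ Zᵢ)`, where `Zᵢ` is the `i`-th
column and `c`, the `i`-th row of the adjugate, depends only on the other columns. Conditionally on
those, this is a ratio of two independent centered Gaussians of equal variance, so every scaled
error coordinate `σᵢ (Ãᵢ - Aᵢ) / σ_y` is standard Cauchy.

If the median of `k` samples leaves `[-τ, τ]`, at least half of them lie in one of the two tails.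
A Cauchy tail beyond `τ ≤ 1` has mass `1/2 - arctan τ / π ≤ 1/2 - τ/4`, so by Hoeffding's
inequality this has probability at most `2 exp (-k τ² / 8)`. Taking `τ = √s` and a union bound over
the `p` coordinates finishes the proof, since `ΔᵀMΔ = ∑ᵢ σᵢ² Δᵢ²`.
-/

/-! ### Ratios of Gaussians and the Cauchy law -/

lemma lintegral_abs_mul_exp_neg_mul_sq {b : ℝ} (hb : 0 < b) :
    ∫⁻ u : ℝ, ENNReal.ofReal (|u| * Real.exp (-b * u ^ 2)) = ENNReal.ofReal (1 / b) := by
  have half_line : ∫ u in Set.Ioi (0 : ℝ), u * Real.exp (-b * u ^ 2) = 1 / (2 * b) := by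
    have := integral_rpow_mul_exp_neg_mul_rpow (p := 2) (q := 1) (by norm_num) (by norm_num) hb
    norm_num [Real.rpow_neg_one] at this
    simpa using this
  have full_line : ∫ u : ℝ, |u| * Real.exp (-b * u ^ 2) = 1 / b := by
    have := integral_comp_abs (f := fun u : ℝ => u * Real.exp (-b * u ^ 2))
    simp only [sq_abs] at this
    rw [this, half_line]
    field_simp
  rw [← full_line, ofReal_integral_eq_lintegral_ofReal]
  · exact .of_integral_ne_zero (by rw [full_line]; positivity)
  · exact ae_of_all _ fun u => by positivity

lemma gaussianPDFReal_inv_sq {u : ℝ} (hu : u ≠ 0) (v : NNReal) (hv : (v : ℝ) = (u ^ 2)⁻¹)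
    (t : ℝ) : gaussianPDFReal 0 v t = |u| * gaussianPDFReal 0 1 (u * t) := by
  have sqrt_scale : √(2 * Real.pi * (u ^ 2)⁻¹) = √(2 * Real.pi) * |u|⁻¹ := by
    rw [Real.sqrt_mul (by positivity), Real.sqrt_inv, Real.sqrt_sq_eq_abs]
  simp only [gaussianPDFReal, hv, sqrt_scale, sub_zero, NNReal.coe_one, mul_one, mul_inv, inv_inv]
  rw [← mul_assoc, mul_comm |u|]
  congr 2
  field_simp

lemma gaussianReal_map_div_const_eq_withDensity {u : ℝ} (hu : u ≠ 0) :
    (gaussianReal 0 1).map (· / u) =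
      volume.withDensity fun t => ENNReal.ofReal |u| * gaussianPDF 0 1 (u * t) := by
  have hvar : ((1 / NNReal.mk (u ^ 2) (sq_nonneg u) : NNReal) : ℝ) = (u ^ 2)⁻¹ := by simp
  have hvar_ne : (1 / NNReal.mk (u ^ 2) (sq_nonneg u) : NNReal) ≠ 0 := by
    rw [← NNReal.coe_ne_zero, hvar]
    positivity
  rw [gaussianReal_map_div_const, zero_div, gaussianReal_of_var_ne_zero _ hvar_ne]
  congr with t
  rw [gaussianPDF, gaussianPDFReal_inv_sq hu _ hvar, ENNReal.ofReal_mul (abs_nonneg u), gaussianPDF]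

lemma lintegral_gaussianPDF_mul_gaussianPDF_mul (t : ℝ) :
    ∫⁻ u, gaussianPDF 0 1 u * (ENNReal.ofReal |u| * gaussianPDF 0 1 (u * t)) =
      cauchyPDF 0 1 t := by
  have integrand (u : ℝ) :
      gaussianPDF 0 1 u * (ENNReal.ofReal |u| * gaussianPDF 0 1 (u * t)) =
        ENNReal.ofReal (2 * Real.pi)⁻¹ *
          ENNReal.ofReal (|u| * Real.exp (-((1 + t ^ 2) / 2) * u ^ 2)) := by
    simp only [gaussianPDF, gaussianPDFReal, sub_zero, NNReal.coe_one, mul_one]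
    rw [← ENNReal.ofReal_mul (by positivity), ← ENNReal.ofReal_mul (by positivity),
      ← ENNReal.ofReal_mul (by positivity)]
    have exponents : -((1 + t ^ 2) / 2) * u ^ 2 = -u ^ 2 / 2 + -(u * t) ^ 2 / 2 := by ring
    rw [exponents, Real.exp_add]
    congr 1
    field_simp
    rw [Real.sq_sqrt (by positivity)]
  simp_rw [integrand]
  rw [lintegral_const_mul _ (by fun_prop), lintegral_abs_mul_exp_neg_mul_sq (by positivity),
    ← ENNReal.ofReal_mul (by positivity), cauchyPDF, cauchyPDFReal]
  congr 1
  simp only [sub_zero, NNReal.coe_one]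
  field_simp
  ring

theorem measurePreserving_div_gaussianReal :
    MeasurePreserving (fun x : ℝ × ℝ => x.2 / x.1) ((gaussianReal 0 1).prod (gaussianReal 0 1))
      (cauchyMeasure 0 1) := by
  have hmeas : Measurable fun x : ℝ × ℝ => x.2 / x.1 := by fun_prop
  refine ⟨hmeas, Measure.ext fun S hS => ?_⟩
  have slice : ∀ᵐ u ∂gaussianReal 0 1,
      gaussianReal 0 1 (Prod.mk u ⁻¹' ((fun x : ℝ × ℝ => x.2 / x.1) ⁻¹' S)) =
        ∫⁻ t in S, ENNReal.ofReal |u| * gaussianPDF 0 1 (u * t) := by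
    have := nullSingletonClass_gaussianReal (μ := 0) one_ne_zero
    filter_upwards [Measure.ae_ne (gaussianReal 0 1) 0] with u hu
    rw [← withDensity_apply _ hS, ← gaussianReal_map_div_const_eq_withDensity hu,
      Measure.map_apply (by fun_prop) hS]
    rfl
  rw [Measure.map_apply hmeas hS, Measure.prod_apply (hmeas hS), lintegral_congr_ae slice,
    gaussianReal_of_var_ne_zero _ one_ne_zero,
    lintegral_withDensity_eq_lintegral_mul _ (by fun_prop) (by
      exact Measurable.lintegral_prod_right'
        (f := fun z : ℝ × ℝ => ENNReal.ofReal |z.1| * gaussianPDF 0 1 (z.1 * z.2)) (by fun_prop))]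
  calc ∫⁻ u, gaussianPDF 0 1 u * ∫⁻ t in S, ENNReal.ofReal |u| * gaussianPDF 0 1 (u * t)
      = ∫⁻ u, ∫⁻ t in S, gaussianPDF 0 1 u * (ENNReal.ofReal |u| * gaussianPDF 0 1 (u * t)) :=
        lintegral_congr fun u => (lintegral_const_mul _ (by fun_prop)).symm
    _ = ∫⁻ t in S, cauchyPDF 0 1 t := by
        rw [lintegral_lintegral_swap (by fun_prop)]
        simp_rw [lintegral_gaussianPDF_mul_gaussianPDF_mul]
    _ = cauchyMeasure 0 1 S := by
        rw [cauchyMeasure_of_scale_ne_zero _ one_ne_zero, withDensity_apply _ hS]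

lemma cauchyMeasure_real_apply {S : Set ℝ} (hS : MeasurableSet S) :
    (cauchyMeasure 0 1).real S = Real.pi⁻¹ * ∫ x in S, (1 + x ^ 2)⁻¹ := by
  have pdf_nonneg : 0 ≤ᵐ[volume.restrict S] cauchyPDFReal 0 1 :=
    ae_of_all _ fun x => (cauchyPDF_pos 0 one_ne_zero x).le
  rw [Measure.real, cauchyMeasure_of_scale_ne_zero _ one_ne_zero, withDensity_apply _ hS]
  simp only [cauchyPDF]
  rw [← integral_eq_lintegral_of_nonneg_ae pdf_nonneg (by fun_prop), ← integral_const_mul]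
  simp [cauchyPDFReal, add_comm]

lemma cauchyMeasure_real_Ioi (t : ℝ) :
    (cauchyMeasure 0 1).real (Set.Ioi t) = 1 / 2 - Real.arctan t / Real.pi := by
  rw [cauchyMeasure_real_apply measurableSet_Ioi, integral_Ioi_inv_one_add_sq]
  field_simp

lemma cauchyMeasure_real_Iio (t : ℝ) :
    (cauchyMeasure 0 1).real (Set.Iio t) = 1 / 2 + Real.arctan t / Real.pi := by
  rw [cauchyMeasure_real_apply measurableSet_Iio, ← integral_Iic_eq_integral_Iio,
    integral_Iic_inv_one_add_sq]
  field_simp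
  ring

lemma concaveOn_arctan_Ici : ConcaveOn ℝ (Set.Ici 0) Real.arctan := by
  refine AntitoneOn.concaveOn_of_deriv (convex_Ici 0) Real.continuous_arctan.continuousOn
    Real.differentiable_arctan.differentiableOn fun x hx y _ hxy => ?_
  rw [interior_Ici, Set.mem_Ioi] at hx
  simp only [Real.deriv_arctan]
  gcongr

lemma div_four_le_arctan_div_pi {τ : ℝ} (h0 : 0 ≤ τ) (h1 : τ ≤ 1) :
    τ / 4 ≤ Real.arctan τ / Real.pi := by
  have chord := concaveOn_arctan_Ici.2 (x := 0) (y := 1) (by simp) (by simp)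
    (sub_nonneg.2 h1) h0 (sub_add_cancel 1 τ)
  simp only [smul_eq_mul, Real.arctan_zero, Real.arctan_one, mul_zero, mul_one, zero_add] at chord
  rw [le_div_iff₀ Real.pi_pos]
  linarith

/-! ### Concentration of the sample median -/

lemma card_filter_eq_countP_sort {k : ℕ} (X : Fin k → ℝ) (P : ℝ → Prop) [DecidablePred P] :
    (Finset.univ.filter fun j => P (X j)).card =
      ((Multiset.map X Finset.univ.val).sort (· ≤ ·)).countP (P ·) := by
  rw [← Multiset.coe_countP, Multiset.sort_eq, Multiset.countP_map]
  rfl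

lemma length_sub_le_countP_lt_of_sortedLE {α : Type*} [LinearOrder α] {L : List α}
    (hL : L.SortedLE) {m : ℕ} (hm : m < L.length) {t : α} (ht : t < L[m]) :
    L.length - m ≤ L.countP (t < ·) := by
  have tail_all : (L.drop m).countP (t < ·) = (L.drop m).length := by
    rw [List.countP_eq_length]
    intro a ha
    obtain ⟨n, hn, rfl⟩ := List.getElem_of_mem ha
    rw [List.getElem_drop, decide_eq_true_eq]
    exact ht.trans_le (hL.getElem_le_getElem_of_le (Nat.le_add_right m n))
  rw [← List.length_drop, ← tail_all]
  exact (List.drop_sublist m L).countP_le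

lemma succ_le_countP_gt_of_sortedLE {α : Type*} [LinearOrder α] {L : List α}
    (hL : L.SortedLE) {m : ℕ} (hm : m < L.length) {t : α} (ht : L[m] < t) :
    m + 1 ≤ L.countP (· < t) := by
  have head_all : (L.take (m + 1)).countP (· < t) = (L.take (m + 1)).length := by
    rw [List.countP_eq_length]
    intro a ha
    obtain ⟨n, hn, rfl⟩ := List.getElem_of_mem ha
    rw [List.getElem_take, decide_eq_true_eq]
    rw [List.length_take] at hn
    exact (hL.getElem_le_getElem_of_le (by omega)).trans_lt ht
  have hlen : m + 1 = (L.take (m + 1)).length := by rw [List.length_take]; omega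
  rw [hlen, ← head_all]
  exact (List.take_sublist (m + 1) L).countP_le

lemma sampleMedian_eq_getElem {k : ℕ} [NeZero k] (X : Fin k → ℝ) :
    sampleMedian X = ((Multiset.map X Finset.univ.val).sort (· ≤ ·))[k / 2]'(by
      simpa using Nat.div_lt_self (NeZero.pos k) one_lt_two) :=
  List.getD_eq_getElem _ _ _

lemma le_two_mul_card_of_lt_sampleMedian {k : ℕ} [NeZero k] {X : Fin k → ℝ} {t : ℝ}
    (h : t < sampleMedian X) : k ≤ 2 * (Finset.univ.filter fun j => t < X j).card := by
  rw [sampleMedian_eq_getElem] at h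
  have := length_sub_le_countP_lt_of_sortedLE (Multiset.pairwise_sort _ _).sortedLE _ h
  rw [← card_filter_eq_countP_sort, Multiset.length_sort, Multiset.card_map,
    Finset.card_val, Finset.card_univ, Fintype.card_fin] at this
  omega

lemma le_two_mul_card_of_sampleMedian_lt {k : ℕ} [NeZero k] {X : Fin k → ℝ} {t : ℝ}
    (h : sampleMedian X < t) : k ≤ 2 * (Finset.univ.filter fun j => X j < t).card := by
  rw [sampleMedian_eq_getElem] at h
  have := succ_le_countP_gt_of_sortedLE (Multiset.pairwise_sort _ _).sortedLE _ h
  rw [← card_filter_eq_countP_sort] at this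
  omega

lemma sampleMedian_comp_strictMono {k : ℕ} [NeZero k] {g : ℝ → ℝ} (hg : StrictMono g)
    (X : Fin k → ℝ) : sampleMedian (fun j => g (X j)) = g (sampleMedian X) := by
  have sort_map : ((Multiset.map X Finset.univ.val).sort (· ≤ ·)).map g =
      (Multiset.map (fun j => g (X j)) Finset.univ.val).sort (· ≤ ·) := by
    have := Multiset.map_sort (f := g) (s := Multiset.map X Finset.univ.val) (r := (· ≤ ·))
      (r' := (· ≤ ·)) fun _ _ _ _ => hg.le_iff_le.symm
    rwa [Multiset.map_map] at this
  simp only [sampleMedian_eq_getElem, ← sort_map, List.getElem_map]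

lemma hasSubgaussianMGF_indicator_sub_measureReal {α : Type*} [MeasurableSpace α]
    (ν : Measure α) [IsProbabilityMeasure ν] {B : Set α} (hB : MeasurableSet B) :
    HasSubgaussianMGF (fun x => B.indicator 1 x - ν.real B) (1 / 4) ν := by
  have := hasSubgaussianMGF_of_mem_Icc (μ := ν) (a := 0) (b := 1) (X := B.indicator 1)
    (measurable_one.indicator hB).aemeasurable
    (ae_of_all _ fun x => ⟨Set.indicator_nonneg (fun _ _ => zero_le_one) _,
      Set.indicator_le_self' (fun _ _ => zero_le_one) _⟩)
  rw [integral_indicator_one hB] at this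
  convert this using 1
  ext
  norm_num

lemma measureReal_card_le_two_mul_card_filter_mem_le {α : Type*} [MeasurableSpace α]
    (ν : Measure α) [IsProbabilityMeasure ν] {B : Set α} [DecidablePred (· ∈ B)]
    (hB : MeasurableSet B) {ε : ℝ} (hε : 0 ≤ ε) (hν : ν.real B ≤ 1 / 2 - ε)
    (ι : Type*) [Fintype ι] :
    (Measure.pi fun _ : ι => ν).real
        {ω | Fintype.card ι ≤ 2 * (Finset.univ.filter fun j => ω j ∈ B).card} ≤
      Real.exp (-2 * Fintype.card ι * ε ^ 2) := by
  set μ := Measure.pi fun _ : ι => ν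
  set f : α → ℝ := B.indicator 1
  have hf : Measurable f := measurable_one.indicator hB
  have subgaussian (j : ι) :
      HasSubgaussianMGF (fun ω : ι → α => f (ω j) - ν.real B) (1 / 4) μ := by
    refine .of_map (X := fun x => f x - ν.real B) (measurable_pi_apply j).aemeasurable ?_
    rw [(measurePreserving_eval (fun _ => ν) j).map_eq]
    exact hasSubgaussianMGF_indicator_sub_measureReal ν hB
  have indep : iIndepFun (fun (j : ι) (ω : ι → α) => f (ω j) - ν.real B) μ :=
    iIndepFun_pi (X := fun _ x => f x - ν.real B) fun _ => (hf.sub_const _).aemeasurable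
  have tail := HasSubgaussianMGF.measure_sum_ge_le_of_iIndepFun indep (s := Finset.univ)
    (fun j _ => subgaussian j) (ε := Fintype.card ι * ε) (by positivity)
  have exponent :
      -(Fintype.card ι * ε) ^ 2 / (2 * ((∑ _j : ι, (1 / 4 : NNReal) : NNReal) : ℝ)) =
        -2 * Fintype.card ι * ε ^ 2 := by
    rw [Finset.sum_const, Finset.card_univ, nsmul_eq_mul]
    push_cast
    rcases eq_or_ne (Fintype.card ι : ℝ) 0 with hcard | hcard
    · simp [hcard]
    · field_simp
      norm_num
  rw [exponent] at tail
  refine (measureReal_mono fun ω hω => ?_).trans tail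
  have sum_eq_card : ∑ j, f (ω j) = (Finset.univ.filter fun j => ω j ∈ B).card := by
    simp [f, Set.indicator_apply]
  have half : (Fintype.card ι : ℝ) ≤ 2 * (Finset.univ.filter fun j => ω j ∈ B).card :=
    mod_cast hω
  simp only [Set.mem_ofPred_eq, Finset.sum_sub_distrib, sum_eq_card, Finset.sum_const,
    Finset.card_univ, nsmul_eq_mul]
  nlinarith [mul_le_mul_of_nonneg_left hν (Fintype.card ι).cast_nonneg]

lemma measureReal_lt_abs_sampleMedian_le (ν : Measure ℝ) [IsProbabilityMeasure ν] {τ ε : ℝ}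
    (hε : 0 ≤ ε) (hlower : ν.real (Set.Iio (-τ)) ≤ 1 / 2 - ε)
    (hupper : ν.real (Set.Ioi τ) ≤ 1 / 2 - ε) (k : ℕ) [NeZero k] :
    (Measure.pi fun _ : Fin k => ν).real {x | τ < |sampleMedian x|} ≤
      2 * Real.exp (-2 * k * ε ^ 2) := by
  classical
  have half_in_tail {B : Set ℝ} (hB : MeasurableSet B) (hνB : ν.real B ≤ 1 / 2 - ε) :
      (Measure.pi fun _ : Fin k => ν).real
          {x | k ≤ 2 * (Finset.univ.filter fun j => x j ∈ B).card} ≤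
        Real.exp (-2 * k * ε ^ 2) := by
    simpa only [Fintype.card_fin] using
      measureReal_card_le_two_mul_card_filter_mem_le ν hB hε hνB (Fin k)
  have subset_union : {x : Fin k → ℝ | τ < |sampleMedian x|} ⊆
      {x | k ≤ 2 * (Finset.univ.filter fun j => x j ∈ Set.Iio (-τ)).card} ∪
        {x | k ≤ 2 * (Finset.univ.filter fun j => x j ∈ Set.Ioi τ).card} := by
    intro x hx
    rcases lt_abs.1 (Set.mem_ofPred.1 hx) with h | h
    · exact .inr (le_two_mul_card_of_lt_sampleMedian h)
    · exact .inl (le_two_mul_card_of_sampleMedian_lt (lt_neg_of_lt_neg h))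
  calc _ ≤ _ := measureReal_mono subset_union
    _ ≤ _ := measureReal_union_le _ _
    _ ≤ Real.exp (-2 * k * ε ^ 2) + Real.exp (-2 * k * ε ^ 2) :=
        add_le_add (half_in_tail measurableSet_Iio hlower) (half_in_tail measurableSet_Ioi hupper)
    _ = _ := (two_mul _).symm

theorem measureReal_lt_abs_sampleMedian_cauchyMeasure_le {τ : ℝ} (h0 : 0 ≤ τ) (h1 : τ ≤ 1)
    (k : ℕ) [NeZero k] :
    (Measure.pi fun _ : Fin k => cauchyMeasure 0 1).real {x | τ < |sampleMedian x|} ≤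
      2 * Real.exp (-k * τ ^ 2 / 8) := by
  have arctan_bound := div_four_le_arctan_div_pi h0 h1
  have := measureReal_lt_abs_sampleMedian_le (cauchyMeasure 0 1) (τ := τ) (ε := τ / 4)
    (by positivity) (by rw [cauchyMeasure_real_Iio, Real.arctan_neg, neg_div]; linarith)
    (by rw [cauchyMeasure_real_Ioi]; linarith) k
  convert this using 3
  ring

/-! ### Gaussian linear systems -/

/-- The standard Gaussian law `N(0, I)` on `ι → ℝ`. -/
noncomputable abbrev gaussianVector (ι : Type*) [Fintype ι] : Measure (ι → ℝ) :=
  Measure.pi fun _ => gaussianReal 0 1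

/-- The law of a square matrix with i.i.d. standard Gaussian entries, given by its rows. -/
noncomputable abbrev gaussianMatrix (ι : Type*) [Fintype ι] : Measure (ι → ι → ℝ) :=
  Measure.pi fun _ => gaussianVector ι

lemma measurable_dotProduct {ι : Type*} [Fintype ι] (c : ι → ℝ) :
    Measurable fun x : ι → ℝ => c ⬝ᵥ x := by
  unfold dotProduct
  fun_prop

lemma gaussianReal_map_mul_eq_toNNReal (a : ℝ) :
    (gaussianReal 0 1).map (a * ·) = gaussianReal 0 (a ^ 2).toNNReal := by
  rw [gaussianReal_map_const_mul, mul_zero, mul_one, Real.toNNReal_of_nonneg (sq_nonneg a)]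

lemma gaussianVector_map_dotProduct {ι : Type*} [Fintype ι] (c : ι → ℝ) :
    (gaussianVector ι).map (c ⬝ᵥ ·) = (gaussianReal 0 1).map (√(∑ r, c r ^ 2) * ·) := by
  have sum_nonneg : 0 ≤ ∑ r, c r ^ 2 := by positivity
  have split : (gaussianVector ι).map (c ⬝ᵥ ·) =
      (Measure.pi fun r => gaussianReal 0 (c r ^ 2).toNNReal).map fun x => ∑ r, x r := by
    simp_rw [← gaussianReal_map_mul_eq_toNNReal]
    rw [← Measure.pi_map_pi (fun r => by fun_prop), Measure.map_map (by fun_prop) (by fun_prop)]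
    rfl
  rw [split, gaussianReal_map_mul_eq_toNNReal, Real.sq_sqrt sum_nonneg]
  refine Measure.ext_of_charFun ?_
  rw [charFun_map_sum_pi_eq_prod]
  ext t
  simp only [Finset.prod_apply, charFun_gaussianReal, ← Complex.exp_sum,
    Real.coe_toNNReal _ (sq_nonneg _), Real.coe_toNNReal _ sum_nonneg]
  simp [Finset.sum_mul, Finset.sum_div]

lemma measurePreserving_dotProduct_div_dotProduct {ι : Type*} [Fintype ι] {c : ι → ℝ}
    (hc : c ≠ 0) :
    MeasurePreserving (fun x : (ι → ℝ) × (ι → ℝ) => (c ⬝ᵥ x.2) / (c ⬝ᵥ x.1))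
      ((gaussianVector ι).prod (gaussianVector ι)) (cauchyMeasure 0 1) := by
  have hdot := measurable_dotProduct c
  have norm_ne : √(∑ r, c r ^ 2) ≠ 0 := by
    obtain ⟨r, hr⟩ := Function.ne_iff.1 hc
    exact (Real.sqrt_pos.2 <| Finset.sum_pos' (fun _ _ => sq_nonneg _)
      ⟨r, Finset.mem_univ r, sq_pos_of_ne_zero hr⟩).ne'
  refine ⟨by fun_prop, ?_⟩
  calc _ = (((gaussianVector ι).map (c ⬝ᵥ ·)).prod ((gaussianVector ι).map (c ⬝ᵥ ·))).map
          fun x : ℝ × ℝ => x.2 / x.1 := by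
        rw [Measure.map_prod_map _ _ hdot hdot, Measure.map_map (by fun_prop) (by fun_prop)]
        rfl
    _ = ((gaussianReal 0 1).prod (gaussianReal 0 1)).map fun x : ℝ × ℝ => x.2 / x.1 := by
        rw [gaussianVector_map_dotProduct, Measure.map_prod_map _ _ (by fun_prop) (by fun_prop),
          Measure.map_map (by fun_prop) (by fun_prop)]
        congr with x
        exact mul_div_mul_left _ _ norm_ne
    _ = cauchyMeasure 0 1 := measurePreserving_div_gaussianReal.map_eq

lemma absolutelyContinuous_pi_fin {n : ℕ} {α : Fin n → Type*} [∀ i, MeasurableSpace (α i)]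
    {μ ν : ∀ i, Measure (α i)} [∀ i, SigmaFinite (μ i)] [∀ i, SigmaFinite (ν i)]
    (h : ∀ i, μ i ≪ ν i) : Measure.pi μ ≪ Measure.pi ν := by
  induction n with
  | zero => rw [Measure.pi_of_empty μ, Measure.pi_of_empty ν]
  | succ n ih =>
    rw [← (measurePreserving_piFinSuccAbove μ 0).symm.map_eq,
      ← (measurePreserving_piFinSuccAbove ν 0).symm.map_eq]
    exact ((h 0).prod (ih fun i => h _)).map (MeasurableEquiv.measurable _)

section Matrices

variable {ι : Type*} [Fintype ι] [DecidableEq ι]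

lemma measurable_det_of : Measurable fun Z : ι → ι → ℝ => (Matrix.of Z).det := by
  apply Continuous.measurable
  exact Continuous.matrix_det continuous_id

-- On each line `t ↦ Z + t • 1` the determinant vanishes only at roots of `charpoly (-Z)`.
lemma ae_volume_det_ne_zero : ∀ᵐ Z : ι → ι → ℝ, (Matrix.of Z).det ≠ 0 := by
  let diagonalLine : ℝ →ₗ[ℝ] (ι → ι → ℝ) :=
    LinearMap.toSpanSingleton ℝ (ι → ι → ℝ) (fun i j => (1 : Matrix ι ι ℝ) i j)
  refine ae_mem_of_ae_add_linearMap_mem diagonalLine volume volume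
    (s := {Z : ι → ι → ℝ | (Matrix.of Z).det ≠ 0})
    (measurable_det_of (measurableSet_singleton 0).compl) fun Z => ?_
  have finite_roots : {t : ℝ | (-Matrix.of Z).charpoly.IsRoot t}.Finite :=
    Polynomial.finite_setOfPred_isRoot (-Matrix.of Z).charpoly_monic.ne_zero
  filter_upwards [measure_eq_zero_iff_ae_notMem.1 (finite_roots.measure_zero volume)] with t ht
  intro hdet
  refine ht ?_
  rw [Polynomial.IsRoot, Matrix.eval_charpoly, sub_neg_eq_add, ← hdet]
  congr 1
  ext i j
  simp [diagonalLine, Matrix.one_apply, Matrix.scalar_apply, Matrix.diagonal_apply, add_comm]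

end Matrices

lemma ae_gaussianMatrix_det_ne_zero (p : ℕ) :
    ∀ᵐ Z ∂gaussianMatrix (Fin p), (Matrix.of Z).det ≠ 0 := by
  have gaussianMatrix_ac : gaussianMatrix (Fin p) ≪ volume := by
    simp only [volume_pi]
    exact absolutelyContinuous_pi_fin fun _ => absolutelyContinuous_pi_fin fun _ =>
      gaussianReal_absolutelyContinuous 0 one_ne_zero
  exact gaussianMatrix_ac.ae_le ae_volume_det_ne_zero

lemma measurePreserving_update {ι : Type*} [Fintype ι] [DecidableEq ι] {α : ι → Type*}
    [∀ j, MeasurableSpace (α j)] (μ : ∀ j, Measure (α j)) [∀ j, IsProbabilityMeasure (μ j)]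
    (i : ι) :
    MeasurePreserving (fun z : (∀ j, α j) × α i => Function.update z.1 i z.2)
      ((Measure.pi μ).prod (μ i)) (Measure.pi μ) := by
  refine ⟨measurable_update', (Measure.pi_eq fun s hs => ?_).symm⟩
  have preimage_box : (fun z : (∀ j, α j) × α i => Function.update z.1 i z.2) ⁻¹' Set.univ.pi s =
      Set.univ.pi (Function.update s i Set.univ) ×ˢ s i := by
    ext z
    simp [Function.forall_update_iff z.1 (p := fun j x => x ∈ s j),
      Function.forall_update_iff s (p := fun j S => z.1 j ∈ S), and_comm]
  have measure_update (j : ι) : μ j (Function.update s i Set.univ j) =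
      Function.update (fun j => μ j (s j)) i 1 j := by
    rw [← measure_univ (μ := μ i)]
    exact Function.apply_update (fun j => μ j) s i Set.univ j
  rw [Measure.map_apply measurable_update' (.univ_pi hs), preimage_box, Measure.prod_prod,
    Measure.pi_pi, Finset.prod_congr rfl fun j _ => measure_update j,
    Finset.prod_update_of_mem (Finset.mem_univ i), one_mul, mul_comm,
    Finset.sdiff_singleton_eq_erase,
    Finset.mul_prod_erase _ (fun j => μ j (s j)) (Finset.mem_univ i)]

section Cramer

variable {ι K : Type*} [Fintype ι] [DecidableEq ι] [Field K]

lemma det_update_column (Z : ι → ι → K) (i : ι) (y : ι → K) :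
    (Matrix.of fun r => Function.update (Z r) i (y r)).det = (Matrix.of Z).adjugate i ⬝ᵥ y := by
  have := congrFun (Matrix.cramer_eq_adjugate_mulVec (Matrix.of Z) y) i
  rwa [Matrix.cramer_apply] at this

lemma inv_mulVec_apply (Z : ι → ι → K) (y : ι → K) (i : ι) :
    ((Matrix.of Z)⁻¹ *ᵥ y) i =
      (Matrix.of fun r => Function.update (Z r) i (y r)).det / (Matrix.of Z).det := by
  rw [Matrix.inv_def, Matrix.smul_mulVec, Ring.inverse_eq_inv, Pi.smul_apply, smul_eq_mul,
    div_eq_inv_mul, det_update_column]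
  rfl

lemma inv_mulVec_update_column_apply (Z : ι → ι → K) (x y : ι → K) (i : ι) :
    ((Matrix.of fun r => Function.update (Z r) i (x r))⁻¹ *ᵥ y) i =
      ((Matrix.of Z).adjugate i ⬝ᵥ y) / ((Matrix.of Z).adjugate i ⬝ᵥ x) := by
  simp only [inv_mulVec_apply, Function.update_idem, det_update_column]

lemma adjugate_row_ne_zero {M : Matrix ι ι K} (hM : M.det ≠ 0) (i : ι) : M.adjugate i ≠ 0 := by
  intro hrow
  apply hM
  have := congrFun₂ M.adjugate_mul i i
  simpa [Matrix.mul_apply, hrow] using this.symm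

lemma measurePreserving_update_column (i : ι) :
    MeasurePreserving (fun z : (ι → ι → ℝ) × (ι → ℝ) => fun r => Function.update (z.1 r) i (z.2 r))
      ((gaussianMatrix ι).prod (gaussianVector ι)) (gaussianMatrix ι) :=
  (measurePreserving_pi _ _ fun _ => measurePreserving_update (fun _ => gaussianReal 0 1) i).comp
    (measurePreserving_arrowProdEquivProdArrow (ι → ℝ) ℝ ι (fun _ => gaussianVector ι)
      fun _ => gaussianReal 0 1).symm

lemma measurable_inv_mulVec_apply (i : ι) :
    Measurable fun z : (ι → ι → ℝ) × (ι → ℝ) => ((Matrix.of z.1)⁻¹ *ᵥ z.2) i := by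
  simp only [inv_mulVec_apply]
  exact (measurable_det_of.comp (measurePreserving_update_column i).measurable).div
    (measurable_det_of.comp measurable_fst)

end Cramer

theorem measurePreserving_inv_mulVec_apply {p : ℕ} (i : Fin p) :
    MeasurePreserving (fun z : (Fin p → Fin p → ℝ) × (Fin p → ℝ) => ((Matrix.of z.1)⁻¹ *ᵥ z.2) i)
      ((gaussianMatrix (Fin p)).prod (gaussianVector (Fin p))) (cauchyMeasure 0 1) := by
  have hmeas := measurable_inv_mulVec_apply i
  have resample := ((measurePreserving_update_column i).prod
    (MeasurePreserving.id (gaussianVector (Fin p)))).comp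
      (measurePreserving_prodAssoc (gaussianMatrix (Fin p)) _ _).symm
  refine ⟨hmeas, Measure.ext fun S hS => ?_⟩
  have slice : ∀ᵐ Z ∂gaussianMatrix (Fin p),
      ((gaussianVector (Fin p)).prod (gaussianVector (Fin p)))
        {x | ((Matrix.of fun r => Function.update (Z r) i (x.1 r))⁻¹ *ᵥ x.2) i ∈ S} =
      cauchyMeasure 0 1 S := by
    filter_upwards [ae_gaussianMatrix_det_ne_zero p] with Z hZ
    simp only [inv_mulVec_update_column_apply]
    exact (measurePreserving_dotProduct_div_dotProduct
      (adjugate_row_ne_zero hZ i)).measure_preimage hS.nullMeasurableSet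
  rw [Measure.map_apply hmeas hS, ← resample.measure_preimage (hmeas hS).nullMeasurableSet,
    Measure.prod_apply (resample.measurable (hmeas hS))]
  exact (lintegral_congr_ae slice).trans (by simp)

/-! ### The estimate from one batch -/

section Batch

variable {p : ℕ}

/-- The law of one batch `(X, η)` of `p` observations: the rows of the design `X` are i.i.d.
`N(0, diag(σ₁², …, σ_p²))` and the independent noise `η` has i.i.d. `N(0, σ_y²)` entries. -/
noncomputable abbrev batchLaw (σ : Fin p → ℝ) (σy : ℝ) :
    Measure ((Fin p → Fin p → ℝ) × (Fin p → ℝ)) :=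
  (Measure.pi fun _ : Fin p => mvg0 (Matrix.diagonal σ)).prod
    (Measure.pi fun _ : Fin p => gaussianReal 0 (σy ^ 2).toNNReal)

/-- The estimate of the coefficients `A` from one batch `(X, η)`: the solution `Ã` of
`XÃ = XA + η`. It is only meaningful when `X` is invertible, as `X⁻¹ = 0` otherwise. -/
noncomputable def batchEstimate (A : Fin p → ℝ) (z : (Fin p → Fin p → ℝ) × (Fin p → ℝ)) :
    Fin p → ℝ :=
  (Matrix.of z.1)⁻¹ *ᵥ (Matrix.of z.1 *ᵥ A + z.2)

lemma measurePreserving_mulVec_mvg0 (L : Matrix (Fin p) (Fin p) ℝ) :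
    MeasurePreserving (L *ᵥ ·) (gaussianVector (Fin p)) (mvg0 L) :=
  ⟨(Continuous.matrix_mulVec continuous_const continuous_id).measurable, rfl⟩

instance isProbabilityMeasure_mvg0 (L : Matrix (Fin p) (Fin p) ℝ) :
    IsProbabilityMeasure (mvg0 L) :=
  Measure.isProbabilityMeasure_map (measurePreserving_mulVec_mvg0 L).aemeasurable

lemma measurePreserving_scale_batchLaw (σ : Fin p → ℝ) (σy : ℝ) :
    MeasurePreserving
      (fun z : (Fin p → Fin p → ℝ) × (Fin p → ℝ) =>
        ((fun r => Matrix.diagonal σ *ᵥ z.1 r, σy • z.2) : (Fin p → Fin p → ℝ) × (Fin p → ℝ)))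
      ((gaussianMatrix (Fin p)).prod (gaussianVector (Fin p))) (batchLaw σ σy) :=
  (measurePreserving_pi _ _ fun _ => measurePreserving_mulVec_mvg0 _).prod
    (measurePreserving_pi _ _ fun _ =>
      ⟨measurable_const_mul σy, gaussianReal_map_mul_eq_toNNReal σy⟩)

lemma of_diagonal_mulVec (σ : Fin p → ℝ) (Z : Fin p → Fin p → ℝ) :
    (Matrix.of fun r => Matrix.diagonal σ *ᵥ Z r) = Matrix.of Z * Matrix.diagonal σ := by
  ext r c
  simp [Matrix.mulVec_diagonal, mul_comm]

lemma batchEstimate_sub {A : Fin p → ℝ} {z : (Fin p → Fin p → ℝ) × (Fin p → ℝ)}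
    (hz : (Matrix.of z.1).det ≠ 0) : batchEstimate A z - A = (Matrix.of z.1)⁻¹ *ᵥ z.2 := by
  rw [batchEstimate, Matrix.mulVec_add, Matrix.mulVec_mulVec,
    Matrix.nonsing_inv_mul _ hz.isUnit, Matrix.one_mulVec, add_sub_cancel_left]

lemma measurable_batchEstimate_apply (A : Fin p → ℝ) (i : Fin p) :
    Measurable fun z => batchEstimate A z i := by
  refine (measurable_inv_mulVec_apply i).comp (measurable_fst.prodMk (.add ?_ measurable_snd))
  apply Continuous.measurable
  exact Continuous.matrix_mulVec continuous_fst continuous_const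

lemma inv_mul_diagonal_mulVec_smul_apply {σ : Fin p → ℝ} (hσ : ∀ i, σ i ≠ 0) (σy : ℝ)
    (M : Matrix (Fin p) (Fin p) ℝ) (η : Fin p → ℝ) (i : Fin p) :
    ((M * Matrix.diagonal σ)⁻¹ *ᵥ (σy • η)) i = σy / σ i * (M⁻¹ *ᵥ η) i := by
  have inv_diagonal : (Matrix.diagonal σ)⁻¹ = Matrix.diagonal fun i => (σ i)⁻¹ :=
    Matrix.inv_eq_right_inv (by simp [Matrix.diagonal_mul_diagonal, hσ])
  rw [Matrix.mul_inv_rev, inv_diagonal, ← Matrix.mulVec_mulVec, Matrix.mulVec_diagonal,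
    Matrix.mulVec_smul, Pi.smul_apply, smul_eq_mul]
  ring

theorem measurePreserving_batchEstimate_error {σ : Fin p → ℝ} (hσ : ∀ i, σ i ≠ 0) {σy : ℝ}
    (hσy : σy ≠ 0) (A : Fin p → ℝ) (i : Fin p) :
    MeasurePreserving (fun z => σ i / σy * (batchEstimate A z i - A i)) (batchLaw σ σy)
      (cauchyMeasure 0 1) := by
  have hmeas := ((measurable_batchEstimate_apply A i).sub_const (A i)).const_mul (σ i / σy)
  have scaling := measurePreserving_scale_batchLaw σ σy
  refine ⟨hmeas, ?_⟩
  rw [← scaling.map_eq, Measure.map_map hmeas scaling.measurable,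
    ← (measurePreserving_inv_mulVec_apply i).map_eq]
  refine Measure.map_congr ?_
  filter_upwards [Measure.quasiMeasurePreserving_fst.ae (ae_gaussianMatrix_det_ne_zero p)]
    with z hz
  have hdet : (Matrix.of fun r => Matrix.diagonal σ *ᵥ z.1 r).det ≠ 0 := by
    rw [of_diagonal_mulVec, Matrix.det_mul, Matrix.det_diagonal]
    exact mul_ne_zero hz (Finset.prod_ne_zero_iff.2 fun i _ => hσ i)
  rw [Function.comp_apply, ← Pi.sub_apply, batchEstimate_sub hdet, of_diagonal_mulVec,
    inv_mul_diagonal_mulVec_smul_apply hσ]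
  have := hσ i
  field_simp

theorem measure_lt_abs_sampleMedian_batchEstimate_le {σ : Fin p → ℝ} (hσ : ∀ i, 0 < σ i)
    {σy : ℝ} (hσy : 0 < σy) (A : Fin p → ℝ) (i : Fin p) {τ : ℝ} (h0 : 0 ≤ τ) (h1 : τ ≤ 1)
    (k : ℕ) [NeZero k] :
    (Measure.pi fun _ : Fin k => batchLaw σ σy)
        {ω | τ < |σ i / σy * (sampleMedian (fun j => batchEstimate A (ω j) i) - A i)|} ≤
      ENNReal.ofReal (2 * Real.exp (-k * τ ^ 2 / 8)) := by
  have scale_mono : StrictMono fun x => σ i / σy * (x - A i) := fun x y hxy =>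
    mul_lt_mul_of_pos_left (sub_lt_sub_right hxy _) (div_pos (hσ i) hσy)
  have errors := measurePreserving_pi (fun _ : Fin k => batchLaw σ σy) _ fun _ =>
    measurePreserving_batchEstimate_error (fun i => (hσ i).ne') hσy.ne' A i
  simp only [← sampleMedian_comp_strictMono scale_mono]
  refine (Measure.le_map_apply errors.aemeasurable {x | τ < |sampleMedian x|}).trans ?_
  rw [errors.map_eq, ← ofReal_measureReal]
  exact ENNReal.ofReal_le_ofReal (measureReal_lt_abs_sampleMedian_cauchyMeasure_le h0 h1 k)

lemma abs_dotProduct_diagonal_sq_mulVec_le {σ Δ : Fin p → ℝ} {σy τ : ℝ} (hσy : σy ≠ 0)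
    (h : ∀ i, |σ i / σy * Δ i| ≤ τ) :
    |Δ ⬝ᵥ (Matrix.diagonal fun i => σ i ^ 2) *ᵥ Δ| ≤ σy ^ 2 * p * τ ^ 2 := by
  have expand : Δ ⬝ᵥ (Matrix.diagonal fun i => σ i ^ 2) *ᵥ Δ =
      ∑ i, σy ^ 2 * (σ i / σy * Δ i) ^ 2 := by
    simp only [dotProduct, Matrix.mulVec_diagonal]
    congr with i
    field_simp
  rw [expand, abs_of_nonneg (by positivity)]
  calc ∑ i, σy ^ 2 * (σ i / σy * Δ i) ^ 2 ≤ ∑ _i : Fin p, σy ^ 2 * τ ^ 2 := by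
        refine Finset.sum_le_sum fun i _ => mul_le_mul_of_nonneg_left ?_ (sq_nonneg σy)
        exact sq_le_sq' (abs_le.1 (h i)).1 (abs_le.1 (h i)).2
    _ = σy ^ 2 * p * τ ^ 2 := by
        rw [Finset.sum_const, Finset.card_univ, Fintype.card_fin, nsmul_eq_mul]
        ring

end Batch

lemma two_mul_exp_le_of_log_le {s δ k : ℝ} (hs : 0 < s) (hδ : 0 < δ)
    (hk : 8 / s * Real.log (2 / δ) ≤ k) : 2 * Real.exp (-k * s / 8) ≤ δ := by
  have log_le : Real.log (2 / δ) ≤ k * s / 8 := by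
    rw [div_mul_eq_mul_div, div_le_iff₀ hs] at hk
    linarith
  rw [← le_div_iff₀' two_pos, ← Real.le_log_iff_exp_le (by positivity), ← inv_div 2 δ,
    Real.log_inv]
  linarith

lemma ofReal_one_sub_card_mul_le_measure {Ω ι : Type*} [MeasurableSpace Ω] (μ : Measure Ω)
    [IsProbabilityMeasure μ] [Fintype ι] {T : Set Ω} {B : ι → Set Ω} {δ : ℝ} (hδ : 0 ≤ δ)
    (hB : ∀ i, μ (B i) ≤ ENNReal.ofReal δ) (hT : Tᶜ ⊆ ⋃ i, B i) :
    ENNReal.ofReal (1 - Fintype.card ι * δ) ≤ μ T := by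
  have union_bound : μ Tᶜ ≤ ENNReal.ofReal (Fintype.card ι * δ) :=
    calc μ Tᶜ ≤ ∑ i, μ (B i) := (measure_mono hT).trans (measure_iUnion_fintype_le μ B)
      _ ≤ ∑ _i : ι, ENNReal.ofReal δ := Finset.sum_le_sum fun i _ => hB i
      _ = ENNReal.ofReal (Fintype.card ι * δ) := by
        rw [Finset.sum_const, Finset.card_univ, nsmul_eq_mul, ENNReal.ofReal_mul (by positivity),
          ENNReal.ofReal_natCast]
  rw [ENNReal.ofReal_sub _ (by positivity), ENNReal.ofReal_one, tsub_le_iff_right,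
    ← measure_univ (μ := μ)]
  exact (measure_univ_le_add_compl T).trans (by gcongr)

/-- Lemma 4.5, per-node guarantee of CauchyEstTree: with `M = diag(σ₁²,…,σ_p²)` and
`k ≥ (8/s)·log(2/δ)` independent batches, each consisting of a design `X⁽ʲ⁾ ∈ ℝ^{p×p}`
with rows i.i.d. `N(0,M)` and independent noise `η⁽ʲ⁾` with i.i.d. `N(0,σ_y²)` entries,
letting `Ã⁽ʲ⁾` solve `X⁽ʲ⁾Ã⁽ʲ⁾ = X⁽ʲ⁾A + η⁽ʲ⁾`, `Â` the coordinate-wise median of the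
`Ã⁽ʲ⁾` and `Δ = Â − A`, one has `Pr(|ΔᵀMΔ| ≤ σ_y²·p·s) ≥ 1 − p·δ`. -/
theorem stmt_13 (p : ℕ) (σ : Fin p → ℝ) (hσ : ∀ i, 0 < σ i) (σy : ℝ) (hσy : 0 < σy)
    (A : Fin p → ℝ) (s δ : ℝ) (hs0 : 0 < s) (hs1 : s < 1) (hδ0 : 0 < δ) (hδ1 : δ < 1)
    (k : ℕ) (hk : (8 / s) * Real.log (2 / δ) ≤ (k : ℝ)) :
    ENNReal.ofReal (1 - (p : ℝ) * δ) ≤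
      (Measure.pi fun _ : Fin k =>
          (Measure.pi fun _ : Fin p => mvg0 (Matrix.diagonal σ)).prod
            (Measure.pi fun _ : Fin p => gaussianReal 0 ((σy ^ 2).toNNReal)))
        {ω | let Atil : Fin k → Fin p → ℝ := fun j =>
               (Matrix.of (ω j).1)⁻¹.mulVec ((Matrix.of (ω j).1).mulVec A + (ω j).2)
             let Δ : Fin p → ℝ := (fun i => sampleMedian fun j => Atil j i) - A
             |Δ ⬝ᵥ (Matrix.diagonal fun i => σ i ^ 2).mulVec Δ|
               ≤ σy ^ 2 * (p : ℝ) * s} := by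
  have : NeZero k := by
    have log_pos : 0 < Real.log (2 / δ) := Real.log_pos (by rw [one_lt_div hδ0]; linarith)
    exact ⟨Nat.cast_ne_zero.1 (lt_of_lt_of_le (by positivity) hk).ne'⟩
  have deviation (i : Fin p) : (Measure.pi fun _ : Fin k => batchLaw σ σy)
      {ω | √s < |σ i / σy * (sampleMedian (fun j => batchEstimate A (ω j) i) - A i)|} ≤
        ENNReal.ofReal δ := by
    refine (measure_lt_abs_sampleMedian_batchEstimate_le hσ hσy A i (Real.sqrt_nonneg s)
      (Real.sqrt_le_one.2 hs1.le) k).trans (ENNReal.ofReal_le_ofReal ?_)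
    rw [Real.sq_sqrt hs0.le]
    exact two_mul_exp_le_of_log_le hs0 hδ0 hk
  conv_lhs => rw [← Fintype.card_fin p]
  refine ofReal_one_sub_card_mul_le_measure _ hδ0.le deviation fun ω hω => ?_
  by_contra no_deviation
  simp only [Set.mem_iUnion, Set.mem_ofPred, not_exists, not_lt] at no_deviation
  have := abs_dotProduct_diagonal_sq_mulVec_le hσy.ne' no_deviation
  rw [Real.sq_sqrt hs0.le] at this
  exact hω this
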